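/- Fix integers k with 1 ≤ k ≤ n and 1 ≤ r, s ≤ k, and functions f, g : ℕ → ℝ with g nondecreasing. If f(d_{H,r}(C)) ≥ g(d_{H,s}(C)) holds for every F_{q^m}-linear code C ⊆ F_{q^m}^n of dimension k, then f(d_{R,r}(C)) ≥ g(d_{R,s}(C)) also holds for every F_{q^m}-linear code C ⊆ F_{q^m}^n of dimension k. -/

import Mathlib

open Submodule Module

namespace RankPaper

variable {n : ℕ}

/-- The coordinatewise `q^i`-th power map on `Fqm^n`. -/
def qpowMap (q i : ℕ) {Fqm : Type} [Field Fqm] (v : Fin n → Fqm) : Fin n → Fqm :=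
  fun j => v j ^ q ^ i

/-- The Galois closure `D* = Σ_{i=0}^{m-1} D^{q^i}` of a subspace (as the span of the
union of the images of `D` under the coordinatewise `q^i`-power maps, `0 ≤ i < m`). -/
def galClosure (q m : ℕ) {Fqm : Type} [Field Fqm] (D : Submodule Fqm (Fin n → Fqm)) :
    Submodule Fqm (Fin n → Fqm) :=
  Submodule.span Fqm (⋃ i ∈ Finset.range m, qpowMap q i '' (D : Set (Fin n → Fqm)))

/-- `D` is Galois closed if `D = D*`. -/
def GaloisClosed (q m : ℕ) {Fqm : Type} [Field Fqm] (D : Submodule Fqm (Fin n → Fqm)) : Prop :=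
  galClosure q m D = D

/-- Rank weight of a subspace: `wt_R(D) = dim_{Fqm} D*`. -/
noncomputable def wtR (q m : ℕ) {Fqm : Type} [Field Fqm]
    (D : Submodule Fqm (Fin n → Fqm)) : ℕ :=
  finrank Fqm (galClosure q m D)

/-- Rank weight of a vector: `wt_R(c) = wt_R(span {c})`. -/
noncomputable def wtRv (q m : ℕ) {Fqm : Type} [Field Fqm] (c : Fin n → Fqm) : ℕ :=
  wtR q m (Submodule.span Fqm ({c} : Set (Fin n → Fqm)))

/-- Hamming weight of a subspace: the number of coordinates where some element is nonzero. -/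
noncomputable def wtH {Fqm : Type} [Field Fqm] (D : Submodule Fqm (Fin n → Fqm)) : ℕ :=
  {i : Fin n | ∃ d ∈ D, d i ≠ 0}.ncard

/-- `r`-th generalized rank weight of a linear code. -/
noncomputable def dR (q m : ℕ) {Fqm : Type} [Field Fqm]
    (C : Submodule Fqm (Fin n → Fqm)) (r : ℕ) : ℕ :=
  sInf { dv | ∃ V : Submodule Fqm (Fin n → Fqm),
    GaloisClosed q m V ∧ r ≤ finrank Fqm ↥(C ⊓ V) ∧ dv = finrank Fqm ↥V }

/-- `r`-th generalized Hamming weight of a linear code. -/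
noncomputable def dH {Fqm : Type} [Field Fqm]
    (C : Submodule Fqm (Fin n → Fqm)) (r : ℕ) : ℕ :=
  sInf { w | ∃ D : Submodule Fqm (Fin n → Fqm), D ≤ C ∧ finrank Fqm ↥D = r ∧ w = wtH D }

/-- `r`-th relative generalized rank weight of a nested code pair. -/
noncomputable def MR (q m : ℕ) {Fqm : Type} [Field Fqm]
    (C₁ C₂ : Submodule Fqm (Fin n → Fqm)) (r : ℕ) : ℕ :=
  sInf { dv | ∃ V : Submodule Fqm (Fin n → Fqm), GaloisClosed q m V ∧
    r ≤ finrank Fqm ↥(C₁ ⊓ V) - finrank Fqm ↥(C₂ ⊓ V) ∧ dv = finrank Fqm ↥V }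

/-- Minimum rank distance of an arbitrary (possibly nonlinear) code. -/
noncomputable def dRset (q m : ℕ) {Fqm : Type} [Field Fqm] (C : Set (Fin n → Fqm)) : ℕ :=
  sInf { w | ∃ c₁ ∈ C, ∃ c₂ ∈ C, c₁ ≠ c₂ ∧ w = wtRv q m (c₁ - c₂) }

/-- The linear functional `x ↦ Σ_j x_j y_j` (dot product with `y`). -/
def dotLin {K : Type} [Field K] (y : Fin n → K) : (Fin n → K) →ₗ[K] K :=
  ∑ j, y j • LinearMap.proj j

/-- Orthogonal complement of a subspace with respect to the standard bilinear form. -/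
def perp {K : Type} [Field K] (L : Submodule K (Fin n → K)) : Submodule K (Fin n → K) :=
  ⨅ y ∈ L, LinearMap.ker (dotLin y)

/-- The coordinatewise inclusion `Fq^n → Fqm^n`. -/
def embFq (Fq Fqm : Type) [Field Fq] [Field Fqm] [Algebra Fq Fqm] :
    (Fin n → Fq) →ₗ[Fq] (Fin n → Fqm) :=
  LinearMap.pi fun j => (Algebra.linearMap Fq Fqm).comp (LinearMap.proj j)

/-- `V_L = L ⊗ Fqm`, the `Fqm`-span of `L ⊆ Fq^n` inside `Fqm^n`. -/
def VL {Fq : Type} (Fqm : Type) [Field Fq] [Field Fqm] [Algebra Fq Fqm]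
    (L : Submodule Fq (Fin n → Fq)) : Submodule Fqm (Fin n → Fqm) :=
  Submodule.span Fqm (embFq Fq Fqm '' (L : Set (Fin n → Fq)))

/-- Rank-punctured code `C^L`: the image of `C` in `Fqm^n / V_{L^⊥}`. -/
noncomputable def punct {Fq Fqm : Type} [Field Fq] [Field Fqm] [Algebra Fq Fqm]
    (L : Submodule Fq (Fin n → Fq)) (C : Submodule Fqm (Fin n → Fqm)) :
    Submodule Fqm ((Fin n → Fqm) ⧸ VL Fqm (perp L)) :=
  Submodule.map (VL Fqm (perp L)).mkQ C

/-!
The `Fqm`-subspaces that are Galois closed are exactly the spans `V_L` of subspaces `L ⊆ Fq^n`: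
a vector `v` is a combination of the traces of its multiples, and those traces are sums of
Frobenius images of multiples of `v`. Hence a Galois closed space is spanned by part of an
`Fq`-basis `b` of `Fq^n`, and is a coordinate subspace in the coordinates of `b`. Writing `C` in
such coordinates gives a code `φ_b(C)` of the same dimension; as Hamming weights only see the
coordinate subspaces, `d_{R,s}(C) ≤ d_{H,s}(φ_b(C))` for every `b` and every `s`, with equality at
`s = r` when `b` is adapted to a space attaining `d_{R,r}(C)`. For that `b`, the bound for
`φ_b(C)` gives the bound for `C`.
-/

section LinearAlgebra

variable {ι K V : Type*} [Ring K] [AddCommGroup V] [Module K V]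

theorem exists_le_finrank_eq [StrongRankCondition K] {W : Submodule K V} {r : ℕ}
    (h : r ≤ finrank K W) : ∃ D ≤ W, finrank K D = r := by
  have := nontrivial_of_invariantBasisNumber K
  obtain ⟨v, hv⟩ := exists_linearIndependent_of_le_finrank h
  refine ⟨(span K (Set.range v)).map W.subtype, map_subtype_le W _, ?_⟩
  rw [finrank_map_subtype_eq, finrank_span_eq_card hv, Fintype.card_fin]

theorem exists_basis_eq_span_image {K : Type*} [DivisionRing K] [Module K V]
    (b₀ : Basis ι K V) (L : Submodule K V) :
    ∃ (b : Basis ι K V) (T : Set ι), L = span K (b '' T) := by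
  obtain ⟨S, -, hspan, hS⟩ := exists_linearIndependent K (L : Set V)
  have hS : LinearIndepOn K id S := hS
  let b := (Basis.extend hS).reindex ((Basis.extend hS).indexEquiv b₀)
  have hrange : S ⊆ Set.range b := by
    rw [Basis.range_reindex, Basis.range_extend]
    exact Basis.subset_extend hS
  refine ⟨b, b ⁻¹' S, ?_⟩
  rw [Set.image_preimage_eq_of_subset hrange, hspan, span_eq]

theorem finrank_span_basis_image [StrongRankCondition K] (B : Basis ι K V) (T : Set ι) :
    finrank K (span K (B '' T)) = T.ncard := by
  have hT : LinearIndependent K fun i : T => B i :=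
    B.linearIndependent.comp _ Subtype.val_injective
  rw [Set.image_eq_range, finrank_eq_nat_card_basis (Basis.span hT), Nat.card_coe_set_eq]

/-- The support of a subspace of `K^ι`, whose cardinality is the Hamming weight. -/
def supp (D : Submodule K (ι → K)) : Set ι :=
  {i | ∃ d ∈ D, d i ≠ 0}

/-- The code `φ(C)` of the coordinate vectors of the elements of `C`, where `φ` is the isomorphism
to `K^ι` given by the basis `B`. -/
noncomputable def coordCode [Finite ι] (B : Basis ι K V) (C : Submodule K V) :
    Submodule K (ι → K) :=
  C.map B.equivFun.toLinearMap

theorem finrank_coordCode [Finite ι] (B : Basis ι K V) (C : Submodule K V) :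
    finrank K (coordCode B C) = finrank K C :=
  LinearEquiv.finrank_map_eq B.equivFun C

theorem supp_coordCode_subset_iff [Finite ι] (B : Basis ι K V) {D : Submodule K V} {T : Set ι} :
    supp (coordCode B D) ⊆ T ↔ D ≤ span K (B '' T) := by
  simp only [supp, coordCode, SetLike.le_def, Basis.mem_span_image, Set.subset_def,
    Set.mem_ofPred_eq, Finset.mem_coe, Finsupp.mem_support_iff, mem_map,
    exists_exists_and_eq_and, LinearEquiv.coe_coe, Basis.equivFun_apply]
  exact ⟨fun h d hd i hi => h i ⟨d, hd, hi⟩, fun h i ⟨d, hd, hi⟩ => h hd i hi⟩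

end LinearAlgebra

section Hamming

variable {K : Type} [Field K] {C D : Submodule K (Fin n → K)} {r : ℕ}

theorem wtH_eq_ncard_supp (D : Submodule K (Fin n → K)) : wtH D = (supp D).ncard := rfl

theorem dH_le_wtH (hDC : D ≤ C) : dH C (finrank K D) ≤ wtH D :=
  Nat.sInf_le ⟨D, hDC, rfl, rfl⟩

theorem exists_wtH_eq_dH (hr : r ≤ finrank K C) : ∃ D ≤ C, finrank K D = r ∧ wtH D = dH C r := by
  obtain ⟨D₀, hD₀C, hD₀⟩ := exists_le_finrank_eq hr
  obtain ⟨D, hDC, hD, hw⟩ := Nat.sInf_mem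
    (s := {w | ∃ D : Submodule K (Fin n → K), D ≤ C ∧ finrank K D = r ∧ w = wtH D})
    ⟨_, D₀, hD₀C, hD₀, rfl⟩
  exact ⟨D, hDC, hD, hw.symm⟩

theorem dH_coordCode_le_ncard (B : Basis (Fin n) K (Fin n → K)) {T : Set (Fin n)}
    (hr : r ≤ finrank K ↥(C ⊓ span K (B '' T))) :
    dH (coordCode B C) r ≤ T.ncard := by
  obtain ⟨D, hD, rfl⟩ := exists_le_finrank_eq hr
  calc dH (coordCode B C) (finrank K D)
      = dH (coordCode B C) (finrank K (coordCode B D)) := by rw [finrank_coordCode]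
    _ ≤ wtH (coordCode B D) := dH_le_wtH (map_mono (hD.trans inf_le_left))
    _ = (supp (coordCode B D)).ncard := wtH_eq_ncard_supp _
    _ ≤ T.ncard := Set.ncard_le_ncard <| (supp_coordCode_subset_iff B).2 (hD.trans inf_le_right)

theorem exists_ncard_eq_dH_coordCode (B : Basis (Fin n) K (Fin n → K)) (hr : r ≤ finrank K C) :
    ∃ T : Set (Fin n), r ≤ finrank K ↥(C ⊓ span K (B '' T)) ∧
      T.ncard = dH (coordCode B C) r := by
  rw [← finrank_coordCode B C] at hr
  obtain ⟨D', hD'C, rfl, hwt⟩ := exists_wtH_eq_dH hr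
  obtain ⟨D, rfl⟩ : ∃ D : Submodule K (Fin n → K), coordCode B D = D' :=
    ⟨_, map_comap_eq_of_surjective B.equivFun.surjective D'⟩
  have hDC : D ≤ C := (map_le_map_iff_of_injective B.equivFun.injective D C).1 hD'C
  refine ⟨supp (coordCode B D), ?_, (wtH_eq_ncard_supp _).symm.trans hwt⟩
  rw [finrank_coordCode]
  exact finrank_mono (le_inf hDC ((supp_coordCode_subset_iff B).1 subset_rfl))

end Hamming

section ScalarExtension

variable {ι : Type*} {Fq Fqm : Type} [Field Fq] [Field Fqm] [Algebra Fq Fqm]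

theorem isBaseChange_embFq : IsBaseChange Fqm (embFq (n := n) Fq Fqm) :=
  .pi _ fun _ => .linearMap Fq Fqm

/-- The basis of `Fqm^n` that consists of the vectors of the basis `b` of `Fq^n`. -/
noncomputable def extendBasis (Fqm : Type) [Field Fqm] [Algebra Fq Fqm]
    (b : Basis ι Fq (Fin n → Fq)) : Basis ι Fqm (Fin n → Fqm) :=
  isBaseChange_embFq.basis b

theorem VL_span (A : Set (Fin n → Fq)) :
    VL Fqm (span Fq A) = span Fqm (embFq Fq Fqm '' A) := by
  rw [VL, ← map_coe, map_span, span_span_of_tower]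

theorem span_extendBasis_image (b : Basis ι Fq (Fin n → Fq)) (T : Set ι) :
    span Fqm (extendBasis Fqm b '' T) = VL Fqm (span Fq (b '' T)) := by
  simp only [VL_span, Set.image_image, extendBasis, IsBaseChange.basis_apply]

end ScalarExtension

section GaloisClosed

variable {Fq Fqm : Type} [Field Fq] [Field Fqm] [Algebra Fq Fqm]

theorem qpowMap_smul (q i : ℕ) (a : Fqm) (v : Fin n → Fqm) :
    qpowMap q i (a • v) = a ^ q ^ i • qpowMap q i v :=
  funext fun j => mul_pow a (v j) (q ^ i)

theorem qpowMap_card_add [Finite Fq] (i : ℕ) (v w : Fin n → Fqm) :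
    qpowMap (Nat.card Fq) i (v + w) = qpowMap (Nat.card Fq) i v + qpowMap (Nat.card Fq) i w := by
  have := Fintype.ofFinite Fq
  have frobenius_pow (x : Fqm) :
      (FiniteField.frobeniusAlgHom Fq Fqm ^ i) x = x ^ Nat.card Fq ^ i := by
    simp only [AlgHom.coe_pow, FiniteField.coe_frobeniusAlgHom, pow_iterate,
      Nat.card_eq_fintype_card]
  funext j
  simp only [qpowMap, Pi.add_apply, ← frobenius_pow, map_add]

theorem qpowMap_card_embFq [Finite Fq] (i : ℕ) (w : Fin n → Fq) :
    qpowMap (Nat.card Fq) i (embFq Fq Fqm w) = embFq Fq Fqm w := by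
  have := Fintype.ofFinite Fq
  funext j
  simp [qpowMap, embFq, ← map_pow, FiniteField.pow_card_pow]

theorem galClosure_le_iff {q m : ℕ} {D E : Submodule Fqm (Fin n → Fqm)} :
    galClosure q m D ≤ E ↔ ∀ i < m, ∀ v ∈ D, qpowMap q i v ∈ E := by
  simp only [galClosure, span_le, Set.iUnion_subset_iff, Set.image_subset_iff, Finset.mem_range]
  rfl

theorem le_galClosure (q : ℕ) {m : ℕ} (hm : 0 < m) (D : Submodule Fqm (Fin n → Fqm)) :
    D ≤ galClosure q m D := fun v hv => by
  have hv₀ : qpowMap q 0 v = v := funext fun j => by simp [qpowMap]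
  exact hv₀ ▸ galClosure_le_iff.1 le_rfl 0 hm v hv

theorem qpowMap_card_mem_VL [Finite Fq] (L : Submodule Fq (Fin n → Fq)) (i : ℕ)
    {v : Fin n → Fqm} (hv : v ∈ VL Fqm L) : qpowMap (Nat.card Fq) i v ∈ VL Fqm L := by
  induction hv using span_induction with
  | mem _ hx =>
    obtain ⟨w, hw, rfl⟩ := hx
    rw [qpowMap_card_embFq]
    exact subset_span ⟨w, hw, rfl⟩
  | zero =>
    rw [← map_zero (embFq Fq Fqm), qpowMap_card_embFq, map_zero]
    exact zero_mem _
  | add x y _ _ hx hy =>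
    rw [qpowMap_card_add]
    exact add_mem hx hy
  | smul a x _ hx =>
    rw [qpowMap_smul]
    exact smul_mem _ _ hx

theorem embFq_trace_eq_sum_qpowMap [Finite Fqm] (v : Fin n → Fqm) :
    embFq Fq Fqm ((Algebra.trace Fq Fqm).compLeft (Fin n) v) =
      ∑ i ∈ Finset.range (finrank Fq Fqm), qpowMap (Nat.card Fq) i v := by
  funext j
  simp [embFq, qpowMap, FiniteField.algebraMap_trace_eq_sum_pow]

theorem sum_traceDual_smul_embFq_trace {ι : Type*} [Fintype ι] [DecidableEq ι]
    [FiniteDimensional Fq Fqm] [Algebra.IsSeparable Fq Fqm] (b : Basis ι Fq Fqm)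
    (v : Fin n → Fqm) :
    ∑ i, b.traceDual i • embFq Fq Fqm ((Algebra.trace Fq Fqm).compLeft (Fin n) (b i • v)) = v := by
  funext j
  conv_rhs => rw [← b.traceDual.sum_repr (v j)]
  simp [embFq, Algebra.smul_def, Algebra.traceForm_apply, mul_comm]

variable [Finite Fqm]

theorem GaloisClosed.embFq_trace_mem {V : Submodule Fqm (Fin n → Fqm)}
    (hV : GaloisClosed (Nat.card Fq) (finrank Fq Fqm) V) {v : Fin n → Fqm} (hv : v ∈ V) :
    embFq Fq Fqm ((Algebra.trace Fq Fqm).compLeft (Fin n) v) ∈ V := by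
  rw [embFq_trace_eq_sum_qpowMap]
  exact sum_mem fun i hi => galClosure_le_iff.1 hV.le i (Finset.mem_range.1 hi) v hv

theorem GaloisClosed.exists_eq_VL {V : Submodule Fqm (Fin n → Fqm)}
    (hV : GaloisClosed (Nat.card Fq) (finrank Fq Fqm) V) :
    ∃ L : Submodule Fq (Fin n → Fq), V = VL Fqm L := by
  have : Finite Fq := Finite.of_injective _ (FaithfulSMul.algebraMap_injective Fq Fqm)
  refine ⟨(V.restrictScalars Fq).comap (embFq Fq Fqm), le_antisymm (fun v hv => ?_) ?_⟩
  · rw [← sum_traceDual_smul_embFq_trace (finBasis Fq Fqm) v]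
    exact sum_mem fun i _ => smul_mem _ _ <|
      subset_span ⟨_, hV.embFq_trace_mem (V.smul_mem _ hv), rfl⟩
  · exact span_le.2 (Set.image_subset_iff.2 subset_rfl)

theorem galoisClosed_VL (L : Submodule Fq (Fin n → Fq)) :
    GaloisClosed (Nat.card Fq) (finrank Fq Fqm) (VL Fqm L) := by
  have : Finite Fq := Finite.of_injective _ (FaithfulSMul.algebraMap_injective Fq Fqm)
  exact le_antisymm (galClosure_le_iff.2 fun i _ _ hv => qpowMap_card_mem_VL L i hv)
    (le_galClosure _ finrank_pos _)

end GaloisClosed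

section RankWeights

theorem dR_le_finrank {K : Type} [Field K] {q m r : ℕ} {C V : Submodule K (Fin n → K)}
    (hV : GaloisClosed q m V) (hr : r ≤ finrank K ↥(C ⊓ V)) : dR q m C r ≤ finrank K V :=
  Nat.sInf_le ⟨V, hV, hr, rfl⟩

theorem exists_finrank_eq_dR {K : Type} [Field K] {q m r : ℕ} {C : Submodule K (Fin n → K)}
    (hm : 0 < m) (hr : r ≤ finrank K C) :
    ∃ V, GaloisClosed q m V ∧ r ≤ finrank K ↥(C ⊓ V) ∧ finrank K V = dR q m C r := by
  obtain ⟨V, hV, hrV, hfin⟩ := Nat.sInf_mem (s := {d | ∃ V : Submodule K (Fin n → K),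
      GaloisClosed q m V ∧ r ≤ finrank K ↥(C ⊓ V) ∧ d = finrank K V})
    ⟨_, ⊤, top_le_iff.1 (le_galClosure q hm ⊤), by rwa [inf_top_eq], rfl⟩
  exact ⟨V, hV, hrV, hfin.symm⟩

variable {Fq Fqm : Type} [Field Fq] [Field Fqm] [Algebra Fq Fqm] [Finite Fqm]
  {C : Submodule Fqm (Fin n → Fqm)} {r : ℕ}

theorem dR_le_dH_coordCode (b : Basis (Fin n) Fq (Fin n → Fq)) (hr : r ≤ finrank Fqm C) :
    dR (Nat.card Fq) (finrank Fq Fqm) C r ≤ dH (coordCode (extendBasis Fqm b) C) r := by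
  obtain ⟨T, hrT, hT⟩ := exists_ncard_eq_dH_coordCode (extendBasis Fqm b) hr
  rw [← hT, ← finrank_span_basis_image (extendBasis Fqm b)]
  refine dR_le_finrank ?_ hrT
  rw [span_extendBasis_image]
  exact galoisClosed_VL _

theorem exists_basis_dR_eq_dH_coordCode (hr : r ≤ finrank Fqm C) :
    ∃ b : Basis (Fin n) Fq (Fin n → Fq), dR (Nat.card Fq) (finrank Fq Fqm) C r =
      dH (coordCode (extendBasis Fqm b) C) r := by
  obtain ⟨V, hV, hrV, hfin⟩ := exists_finrank_eq_dR (q := Nat.card Fq)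
    (finrank_pos (R := Fq) (M := Fqm)) hr
  obtain ⟨L, rfl⟩ := hV.exists_eq_VL
  obtain ⟨b, T, rfl⟩ := exists_basis_eq_span_image (Pi.basisFun Fq (Fin n)) L
  refine ⟨b, (dR_le_dH_coordCode b hr).antisymm ?_⟩
  rw [← span_extendBasis_image] at hrV hfin
  rw [← hfin, finrank_span_basis_image]
  exact dH_coordCode_le_ncard _ hrV

end RankWeights

theorem stmt9_general {q m n k r s : ℕ} {Fq Fqm : Type} {α : Type*} [Field Fq] [Field Fqm]
    [Algebra Fq Fqm] [Finite Fqm] [Preorder α] (hq : Nat.card Fq = q) (hm : finrank Fq Fqm = m)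
    (hrk : r ≤ k) (hsk : s ≤ k) {f g : ℕ → α} (hg : Monotone g)
    (hH : ∀ C : Submodule Fqm (Fin n → Fqm), finrank Fqm C = k → g (dH C s) ≤ f (dH C r))
    (C : Submodule Fqm (Fin n → Fqm)) (hC : finrank Fqm C = k) :
    g (dR q m C s) ≤ f (dR q m C r) := by
  subst hq hm hC
  obtain ⟨b, hb⟩ := exists_basis_dR_eq_dH_coordCode (Fq := Fq) hrk
  rw [hb]
  calc g (dR (Nat.card Fq) (finrank Fq Fqm) C s)
      ≤ g (dH (coordCode (extendBasis Fqm b) C) s) := hg (dR_le_dH_coordCode b hsk)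
    _ ≤ f (dH (coordCode (extendBasis Fqm b) C) r) := hH _ (finrank_coordCode _ C)

/-- every bound `f(d_{H,r}(C)) ≥ g(d_{H,s}(C))` (with `g` nondecreasing)
valid for all `k`-dimensional codes transfers to generalized rank weights. -/
theorem stmt9 (q m n k r s : ℕ) (Fq Fqm : Type) [Field Fq] [Field Fqm] [Algebra Fq Fqm]
    [Finite Fqm] (hq : Nat.card Fq = q) (hm : finrank Fq Fqm = m)
    (hk1 : 1 ≤ k) (hkn : k ≤ n) (hr1 : 1 ≤ r) (hrk : r ≤ k) (hs1 : 1 ≤ s) (hsk : s ≤ k)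
    (f g : ℕ → ℝ) (hg : Monotone g)
    (hH : ∀ C : Submodule Fqm (Fin n → Fqm), finrank Fqm C = k →
      g (dH C s) ≤ f (dH C r)) :
    ∀ C : Submodule Fqm (Fin n → Fqm), finrank Fqm C = k →
      g (dR q m C s) ≤ f (dR q m C r) := by
  exact stmt9_general hq hm hrk hsk hg hH

end RankPaper
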